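/- Let U ⊂ ℝ⁷ be a coassociative subspace, i.e. a 4-dimensional subspace admitting an orthonormal basis (u₁,u₂,u₃,u₄) with (*₇φ)(u₁,u₂,u₃,u₄) = 1; orient U by this basis and identify Λ²U* = {α ∈ Λ²(ℝ⁷)* : i(v)α = 0 for all v ∈ U^⊥}. Then a 2-form α ∈ Λ²U* is anti-self-dual on U (with respect to the induced metric and this orientation) if and only if α ∧ *₇φ = 0. -/

import Mathlib

open scoped BigOperators

noncomputable section

namespace FMpaper

variable {K : Type*} [NormedField K] [NormedAlgebra ℝ K]

/-- Coefficient model for the exterior algebra of `(ℝⁿ)*` with scalars in `K`: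
a form is given by its coefficients on the basis `e^S`, `S ⊆ {0, …, n-1}` sorted. -/
abbrev Form (K : Type*) (n : ℕ) := Finset (Fin n) → K

variable {n : ℕ}

/-- Sign such that `e^s ∧ e^t = signMerge s t • e^(s ∪ t)` for disjoint sorted `s, t`. -/
def signMerge (s t : Finset (Fin n)) : K :=
  (-1 : K) ^ (((s ×ˢ t).filter (fun p => p.2 < p.1)).card)

/-- Wedge product. -/
def wedge (α β : Form K n) : Form K n :=
  fun u => ∑ s ∈ u.powerset, signMerge s (u \ s) * α s * β (u \ s)

/-- Hodge star operator (for the standard inner product and orientation `e^{0⋯(n-1)}`). -/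
def hstar (α : Form K n) : Form K n :=
  fun t => signMerge tᶜ t * α tᶜ

/-- Interior product with the basis vector `e_μ`. -/
def iprodB (μ : Fin n) (α : Form K n) : Form K n :=
  fun t => if μ ∈ t then 0
    else (-1 : K) ^ ((t.filter (fun j => j < μ)).card) * α (insert μ t)

/-- Interior product with the vector `v`. -/
def iprod (v : Fin n → K) (α : Form K n) : Form K n :=
  fun t => ∑ μ, v μ * iprodB μ α t

/-- The basis covector `e^i` as a 1-form. -/
def e1 (i : Fin n) : Form K n := fun s => if s = {i} then 1 else 0

/-- The covector `v♭` dual to a vector `v`. -/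
def flat (v : Fin n → K) : Form K n := ∑ i, v i • e1 i

/-- The vector `α♯` dual to a 1-form `α`. -/
def sharp1 (α : Form K n) : Fin n → K := fun i => α {i}

/-- The inner product of forms (extended `K`-bilinearly). -/
def inner' (α β : Form K n) : K := ∑ s, α s * β s

/-- The (Euclidean) norm of a form; for an `√-1 ℝ`-valued form `√-1 γ` this is `‖γ‖`. -/
def fnorm (α : Form K n) : ℝ := Real.sqrt (∑ s, ‖α s‖ ^ 2)

/-- `α` is homogeneous of degree `k`. -/
def isGrade (k : ℕ) (α : Form K n) : Prop := ∀ s, s.card ≠ k → α s = 0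

/-- Evaluation of a `k`-form on `k` vectors. -/
def evalForm {k : ℕ} (α : Form K n) (v : Fin k → (Fin n → K)) : K :=
  ∑ s : Finset (Fin n), α s *
    (if h : s.card = k then
      Matrix.det (Matrix.of fun i j => v i ((s.orderIsoOfFin h j : Fin n))) else 0)

/-- The matrix of the skew-symmetric endomorphism `γ♯` associated with a 2-form `γ`
via `⟨γ♯ u, v⟩ = γ(u, v)`. -/
def mat2 (γ : Form K n) : Matrix (Fin n) (Fin n) K :=
  Matrix.of fun i j => if i < j then γ {i, j} else if j < i then - γ {i, j} else 0

/-- The standard `G₂` 3-form `φ = e^{123}+e^{145}+e^{167}+e^{246}−e^{257}−e^{347}−e^{356}`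
on `ℝ⁷` (indices `1, …, 7` shifted to `0, …, 6`). -/
def phi7 : Form K 7 := fun s =>
  if s = ({0, 1, 2} : Finset (Fin 7)) then 1
  else if s = ({0, 3, 4} : Finset (Fin 7)) then 1
  else if s = ({0, 5, 6} : Finset (Fin 7)) then 1
  else if s = ({1, 3, 5} : Finset (Fin 7)) then 1
  else if s = ({1, 4, 6} : Finset (Fin 7)) then -1
  else if s = ({2, 3, 6} : Finset (Fin 7)) then -1
  else if s = ({2, 4, 5} : Finset (Fin 7)) then -1
  else 0

/-- `*₇φ = e^{4567}+e^{2367}+e^{2345}+e^{1357}−e^{1346}−e^{1256}−e^{1247}` on `ℝ⁷`. -/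
def psi7 : Form K 7 := fun s =>
  if s = ({3, 4, 5, 6} : Finset (Fin 7)) then 1
  else if s = ({1, 2, 5, 6} : Finset (Fin 7)) then 1
  else if s = ({1, 2, 3, 4} : Finset (Fin 7)) then 1
  else if s = ({0, 2, 4, 6} : Finset (Fin 7)) then 1
  else if s = ({0, 2, 3, 5} : Finset (Fin 7)) then -1
  else if s = ({0, 1, 4, 5} : Finset (Fin 7)) then -1
  else if s = ({0, 1, 3, 6} : Finset (Fin 7)) then -1
  else 0

/-- The `G₂` 3-form `φ` on `V = span{e₁, …, e₇} ⊂ ℝ⁸`, regarded as a form on `ℝ⁸`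
annihilated by `i(e₀)` (indices `1, …, 7` of `ℝ⁸`). -/
def phi8 : Form K 8 := fun s =>
  if s = ({1, 2, 3} : Finset (Fin 8)) then 1
  else if s = ({1, 4, 5} : Finset (Fin 8)) then 1
  else if s = ({1, 6, 7} : Finset (Fin 8)) then 1
  else if s = ({2, 4, 6} : Finset (Fin 8)) then 1
  else if s = ({2, 5, 7} : Finset (Fin 8)) then -1
  else if s = ({3, 4, 7} : Finset (Fin 8)) then -1
  else if s = ({3, 5, 6} : Finset (Fin 8)) then -1
  else 0

/-- `*₇φ` on `V ⊂ ℝ⁸`, regarded as a 4-form on `ℝ⁸` annihilated by `i(e₀)`. -/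
def psi8 : Form K 8 := fun s =>
  if s = ({4, 5, 6, 7} : Finset (Fin 8)) then 1
  else if s = ({2, 3, 6, 7} : Finset (Fin 8)) then 1
  else if s = ({2, 3, 4, 5} : Finset (Fin 8)) then 1
  else if s = ({1, 3, 5, 7} : Finset (Fin 8)) then 1
  else if s = ({1, 3, 4, 6} : Finset (Fin 8)) then -1
  else if s = ({1, 2, 5, 6} : Finset (Fin 8)) then -1
  else if s = ({1, 2, 4, 7} : Finset (Fin 8)) then -1
  else 0

/-- The standard Cayley 4-form `Φ = e⁰ ∧ φ + *₇φ` on `ℝ⁸`. -/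
def Phi8 : Form K 8 := wedge (e1 0) phi8 + psi8

/-- The index set of `V = span{e₁, …, e₇} ⊂ ℝ⁸`. -/
def Vset : Finset (Fin 8) := {1, 2, 3, 4, 5, 6, 7}

/-- The Hodge star `*₇` of `V ⊂ ℝ⁸` (volume form `e^{1⋯7}`), acting on forms on `ℝ⁸`
annihilated by `i(e₀)`. -/
def star7 (α : Form K 8) : Form K 8 :=
  fun t => if (0 : Fin 8) ∈ t then 0 else signMerge (Vset \ t) t * α (Vset \ t)

/-- `α` is (the pullback of) a form on `V`, i.e. `i(e₀) α = 0`. -/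
def onV (α : Form K 8) : Prop := ∀ s, (0 : Fin 8) ∈ s → α s = 0

/-- `λ²(α) = ½ (e⁰ ∧ α + i(α♯) φ)` for `α ∈ V*`. -/
def lambda2 (α : Form K 8) : Form K 8 :=
  (2 : K)⁻¹ • (wedge (e1 0) α + iprod (sharp1 α) phi8)

/-- `λ⁴(α) = (1/√8) (e⁰ ∧ i(α♯) *₇φ − α ∧ φ)` for `α ∈ V*`. -/
def lambda4 (α : Form K 8) : Form K 8 :=
  (algebraMap ℝ K (Real.sqrt 8))⁻¹ • (wedge (e1 0) (iprod (sharp1 α) psi8) - wedge α phi8)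

/-- `λ⁶(α) = *₈ λ²(α)` for `α ∈ V*`. -/
def lambda6 (α : Form K 8) : Form K 8 := hstar (lambda2 α)

/-- The projection `π²₇(α) = (α + *₈(Φ ∧ α))/4` onto `Λ²₇`. -/
def pi27 (α : Form K 8) : Form K 8 := (4 : K)⁻¹ • (α + hstar (wedge Phi8 α))

/-- The projection `π⁴₇(β) = Σ_{μ=1}^{7} ⟨β, λ⁴(e^μ)⟩ λ⁴(e^μ)` onto `Λ⁴₇`. -/
def pi47 (β : Form K 8) : Form K 8 :=
  ∑ μ : Fin 7, inner' β (lambda4 (e1 μ.succ)) • lambda4 (e1 μ.succ)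

/-- `τ(u₀,u₁,u₂,u₃) = Σ_{μ=1}^{7} λ⁴(e^μ)(u₀,u₁,u₂,u₃) ⬝ λ⁴(e^μ) = π⁴₇(u₀♭∧u₁♭∧u₂♭∧u₃♭)`. -/
def tau4 (u : Fin 4 → (Fin 8 → K)) : Form K 8 :=
  ∑ μ : Fin 7, evalForm (lambda4 (e1 μ.succ)) u • lambda4 (e1 μ.succ)

/-- Partial derivative `∂f^a/∂x^j` at `x`. -/
def pd {m p : ℕ} (f : (Fin m → ℝ) → (Fin p → ℝ)) (x : Fin m → ℝ) (j : Fin m) (a : Fin p) : ℝ :=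
  fderiv ℝ f x (Pi.single j 1) a

/-!
`*₇(α ∧ *₇φ)` is the contraction of the 2-form `α` with `φ`, so `α ∧ *₇φ = 0` says that this
contraction vanishes. It sends `a♭ ∧ b♭` to the cross product `a × b` of the `G₂`-structure, and
`⟨a × b, c × d⟩ = ⟨a, c⟩⟨b, d⟩ - ⟨a, d⟩⟨b, c⟩ + *₇φ(a, b, c, d)`.
For a positive orthonormal basis `u` of a coassociative subspace, the unit vectors `u₀ × u₁` and
`u₂ × u₃` therefore have inner product `1` and agree; likewise `u₀ × u₂ = u₃ × u₁` and
`u₀ × u₃ = u₁ × u₂`. The contraction of `α ∈ Λ²U*` is thus the combination of the orthonormal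
vectors `u₀ × u₁`, `u₀ × u₂`, `u₀ × u₃` with the self-dual coefficients of `α`.
-/

open scoped Matrix

section ExteriorAlgebra

variable {𝕜 : Type*} [NormedField 𝕜]

theorem sum_alternatingMap_apply {R M N ι κ : Type*} [Semiring R] [AddCommMonoid M] [Module R M]
    [AddCommMonoid N] [Module R N] (s : Finset κ) (f : κ → M [⋀^ι]→ₗ[R] N) (v : ι → M) :
    (∑ i ∈ s, f i) v = ∑ i ∈ s, f i v :=
  map_sum (⟨⟨fun g => g v, rfl⟩, fun _ _ => rfl⟩ : M [⋀^ι]→ₗ[R] N →+ N) f s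

/-- The alternating multilinear map underlying the evaluation `evalForm α` on `k` vectors. -/
def evalAlternating (k : ℕ) (α : Form 𝕜 n) : (Fin n → 𝕜) [⋀^Fin k]→ₗ[𝕜] 𝕜 :=
  ∑ s : Finset (Fin n), α s •
    if h : s.card = k then
      Matrix.detRowAlternating.compLinearMap (LinearMap.funLeft 𝕜 𝕜 (s.orderEmbOfFin h))
    else 0

theorem evalAlternating_apply {k : ℕ} (α : Form 𝕜 n) (v : Fin k → Fin n → 𝕜) :
    evalAlternating k α v = evalForm α v := by
  simp only [evalAlternating, evalForm, sum_alternatingMap_apply, AlternatingMap.smul_apply,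
    smul_eq_mul]
  refine Finset.sum_congr rfl fun s _ => ?_
  split_ifs <;> rfl

theorem evalForm_comp_perm {k : ℕ} (α : Form 𝕜 n) (v : Fin k → Fin n → 𝕜)
    (σ : Equiv.Perm (Fin k)) : evalForm α (v ∘ σ) = Equiv.Perm.sign σ • evalForm α v := by
  simp only [← evalAlternating_apply, AlternatingMap.map_perm]

theorem evalForm_eq_zero_of_eq {k : ℕ} (α : Form 𝕜 n) {v : Fin k → Fin n → 𝕜} {i j : Fin k}
    (h : v i = v j) (hij : i ≠ j) : evalForm α v = 0 := by
  rw [← evalAlternating_apply, AlternatingMap.map_eq_zero_of_eq _ v h hij]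

theorem det_orderIsoOfFin_eq {ι R : Type*} [LinearOrder ι] [CommRing R] {k : ℕ} {s : Finset ι}
    (h : s.card = k) {f : Fin k → ι} (hf : StrictMono f) (hfs : ∀ j, f j ∈ s)
    (v : Fin k → ι → R) :
    (Matrix.of fun i j => v i (s.orderIsoOfFin h j)).det =
      (Matrix.of fun i j => v i (f j)).det := by
  rw [Finset.orderEmbOfFin_unique h hfs hf]
  rfl

theorem evalForm_single_of_strictMono {k : ℕ} (α : Form 𝕜 n) {f : Fin k → Fin n}
    (hf : StrictMono f) :
    evalForm α (fun i => Pi.single (f i) 1) = α (Finset.univ.image f) := by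
  have hcard : (Finset.univ.image f).card = k := by
    simp [Finset.card_image_of_injective _ hf.injective]
  rw [evalForm, Finset.sum_eq_single_of_mem _ (Finset.mem_univ (Finset.univ.image f)),
    dif_pos hcard, det_orderIsoOfFin_eq hcard hf (by simp)]
  · have hone : (Matrix.of fun i j => (Pi.single (f i) 1 : Fin n → 𝕜) (f j)) = 1 := by
      ext i j
      simp [Pi.single_apply, Matrix.one_apply, hf.injective.eq_iff, eq_comm]
    rw [hone, Matrix.det_one, mul_one]
  · intro s _ hs
    split_ifs with h
    · obtain ⟨i, hi⟩ : ∃ i, f i ∉ s := by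
        by_contra! hfs
        exact hs (Finset.eq_of_subset_of_card_le (by simpa [Finset.image_subset_iff] using hfs)
          (by rw [hcard, h])).symm
      rw [Matrix.det_eq_zero_of_row_eq_zero i, mul_zero]
      intro j
      exact Pi.single_eq_of_ne (ne_of_mem_of_not_mem (Finset.coe_mem _) hi) _
    · rw [mul_zero]

theorem evalForm_pair_swap (α : Form 𝕜 n) (x y : Fin n → 𝕜) :
    evalForm α ![y, x] = -evalForm α ![x, y] := by
  have hswap : ![y, x] = ![x, y] ∘ Equiv.swap (0 : Fin 2) 1 := by
    ext i : 1
    fin_cases i <;> rfl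
  rw [hswap, evalForm_comp_perm, Equiv.Perm.sign_swap zero_ne_one, Units.neg_smul, one_smul]

theorem evalForm_pair_eq_sum_left (α : Form 𝕜 n) (x y : Fin n → 𝕜) :
    evalForm α ![x, y] = ∑ i, x i * evalForm α ![Pi.single i 1, y] := by
  have hcurry : ∀ x, evalForm α ![x, y] = (evalAlternating 2 α).curryLeft x ![y] := fun x =>
    (evalAlternating_apply α _).symm
  simp only [hcurry]
  conv_lhs => rw [pi_eq_sum_univ' x]
  simp only [map_sum, map_smul, sum_alternatingMap_apply, AlternatingMap.smul_apply, smul_eq_mul]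

theorem evalForm_pair_eq_sum_right (α : Form 𝕜 n) (x y : Fin n → 𝕜) :
    evalForm α ![x, y] = ∑ j, evalForm α ![x, Pi.single j 1] * y j := by
  rw [evalForm_pair_swap, evalForm_pair_eq_sum_left, ← Finset.sum_neg_distrib]
  refine Finset.sum_congr rfl fun j _ => ?_
  rw [evalForm_pair_swap α x, mul_neg, neg_neg, mul_comm]

theorem transpose_mat2 (α : Form 𝕜 n) : (mat2 α)ᵀ = -mat2 α := by
  ext i j
  rcases lt_trichotomy i j with h | rfl | h <;>
    simp [mat2, *, not_lt_of_gt, Finset.pair_comm]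

theorem evalForm_pair_single (α : Form 𝕜 n) (i j : Fin n) :
    evalForm α ![Pi.single i 1, Pi.single j 1] = mat2 α i j := by
  have hlt : ∀ {i j : Fin n}, i < j →
      evalForm α ![Pi.single i 1, Pi.single j 1] = α {i, j} := by
    intro i j hij
    have hmono : StrictMono ![i, j] := by simpa [Fin.strictMono_iff_lt_succ] using hij
    convert evalForm_single_of_strictMono α hmono using 2
    · ext a : 1
      fin_cases a <;> rfl
    · ext a
      simp [eq_comm]
  rcases lt_trichotomy i j with h | rfl | h
  · simp [mat2, h, hlt h]
  · rw [evalForm_eq_zero_of_eq α (i := 0) (j := 1) rfl zero_ne_one]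
    simp [mat2]
  · rw [evalForm_pair_swap, hlt h]
    simp [mat2, h, h.not_gt, Finset.pair_comm]

theorem evalForm_pair (α : Form 𝕜 n) (x y : Fin n → 𝕜) :
    evalForm α ![x, y] = x ⬝ᵥ mat2 α *ᵥ y := by
  rw [evalForm_pair_eq_sum_left]
  simp only [evalForm_pair_eq_sum_right α _ y, evalForm_pair_single]
  rfl

theorem iprod_singleton (v : Fin n → 𝕜) (α : Form 𝕜 n) (j : Fin n) :
    iprod v α {j} = (v ᵥ* mat2 α) j := by
  refine Finset.sum_congr rfl fun i _ => ?_
  rcases lt_trichotomy i j with h | rfl | h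
  · simp [iprodB, mat2, h, h.ne, Finset.filter_singleton, h.not_gt]
  · simp [iprodB, mat2]
  · simp [iprodB, mat2, h, h.ne', Finset.filter_singleton, h.not_gt]

theorem isGrade_flat (v : Fin n → 𝕜) : isGrade 1 (flat v) := by
  intro s hs
  have hne : ∀ i, s ≠ {i} := by
    rintro i rfl
    exact hs (Finset.card_singleton i)
  simp [flat, e1, hne]

theorem flat_singleton (v : Fin n → 𝕜) (i : Fin n) : flat v {i} = v i := by
  simp [flat, e1]

theorem isGrade_wedge {p q : ℕ} {α β : Form 𝕜 n} (hα : isGrade p α) (hβ : isGrade q β) :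
    isGrade (p + q) (wedge α β) := by
  intro u hu
  refine Finset.sum_eq_zero fun s hs => ?_
  by_cases hp : s.card = p
  · rw [hβ (u \ s), mul_zero]
    have := Finset.card_sdiff_add_card_eq_card (Finset.mem_powerset.mp hs)
    omega
  · rw [hα s hp, mul_zero, zero_mul]

theorem wedge_pair_of_isGrade_one {α : Form 𝕜 n} (hα : isGrade 1 α) (β : Form 𝕜 n) {i j : Fin n}
    (hij : i < j) : wedge α β {i, j} = α {i} * β {j} - α {j} * β {i} := by
  have hi : ({i, j} : Finset (Fin n)) \ {i} = {j} := by grind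
  have hj : ({i, j} : Finset (Fin n)) \ {j} = {i} := by grind
  have hsub : {{i}, {j}} ⊆ ({i, j} : Finset (Fin n)).powerset := by
    simp [Finset.insert_subset_iff]
  rw [wedge, ← Finset.sum_subset hsub, Finset.sum_pair (by simpa using hij.ne)]
  · simp [hi, hj, signMerge, Finset.filter_singleton, hij, hij.not_gt, sub_eq_add_neg]
  · intro s hs hs'
    rw [hα s, mul_zero, zero_mul]
    intro hcard
    obtain ⟨a, rfl⟩ := Finset.card_eq_one.mp hcard
    simp_all

theorem wedge_apply_eq_sum_right (α β : Form 𝕜 n) (u : Finset (Fin n)) :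
    wedge α β u = ∑ t ∈ u.powerset, signMerge (u \ t) t * α (u \ t) * β t := by
  refine Finset.sum_bij' (fun s _ => u \ s) (fun s _ => u \ s) ?_ ?_ ?_ ?_ ?_ <;>
    simp +contextual

theorem sharp1_hstar_eq_zero_iff {β : Form 𝕜 (n + 1)} (hβ : isGrade n β) :
    sharp1 (hstar β) = 0 ↔ β = 0 := by
  refine ⟨fun h => funext fun u => ?_, ?_⟩
  · by_cases hu : u.card = n
    · obtain ⟨k, hk⟩ : ∃ k, uᶜ = {k} := by
        rw [← Finset.card_eq_one, Finset.card_compl, Fintype.card_fin, hu, Nat.add_sub_cancel_left]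
      have hk' := congrFun h k
      rw [eq_compl_comm.mp hk.symm]
      simpa [sharp1, hstar, signMerge] using hk'
    · exact hβ u hu
  · rintro rfl
    ext k
    simp [sharp1, hstar]

end ExteriorAlgebra

section Coassociative

variable {𝕜 : Type*} [NormedField 𝕜]

theorem mat2_eq_transpose_mul_mul {ι : Type*} [Fintype ι] [DecidableEq ι] {α : Form 𝕜 n}
    {U : Matrix ι (Fin n) 𝕜} (hUU : U * Uᵀ = 1) (hU : ∀ v, U *ᵥ v = 0 → iprod v α = 0) :
    mat2 α = Uᵀ * (U * mat2 α * Uᵀ) * U := by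
  set P : Matrix (Fin n) (Fin n) 𝕜 := 1 - Uᵀ * U with hP
  have hUP : U * Pᵀ = 0 := by
    simp [hP, Matrix.mul_sub, ← Matrix.mul_assoc, hUU]
  have hleft : P * mat2 α = 0 := by
    refine Matrix.ext_of_single_vecMul fun i => funext fun j => ?_
    have hv : U *ᵥ (Pi.single i 1 ᵥ* P) = 0 := by
      rw [← Matrix.mulVec_transpose, Matrix.mulVec_mulVec, hUP, Matrix.zero_mulVec]
    rw [← Matrix.vecMul_vecMul, ← iprod_singleton, hU _ hv, Matrix.vecMul_zero]
    rfl
  have hright : mat2 α * P = 0 := by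
    simpa [hP, Matrix.transpose_mul, transpose_mat2] using congrArg Matrix.transpose hleft
  rw [hP, sub_mul, one_mul, sub_eq_zero] at hleft
  rw [hP, mul_sub, mul_one, sub_eq_zero] at hright
  calc mat2 α = Uᵀ * U * (mat2 α * (Uᵀ * U)) := by rw [← hright, ← hleft]
    _ = Uᵀ * (U * mat2 α * Uᵀ) * U := by simp only [Matrix.mul_assoc]

theorem two_smul_eq_sum_evalForm_smul_wedge {ι : Type*} [Fintype ι] [DecidableEq ι]
    {α : Form 𝕜 n} (hα : isGrade 2 α) {u : ι → Fin n → 𝕜}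
    (hu : ∀ a b, u a ⬝ᵥ u b = if a = b then 1 else 0)
    (hU : ∀ v, (∀ a, v ⬝ᵥ u a = 0) → iprod v α = 0) :
    (2 : 𝕜) • α = ∑ a, ∑ b, evalForm α ![u a, u b] • wedge (flat (u a)) (flat (u b)) := by
  have hmat : ∀ i j, mat2 α i j = ∑ a, ∑ b, evalForm α ![u a, u b] * (u a i * u b j) := by
    intro i j
    have hUU : Matrix.of u * (Matrix.of u)ᵀ = 1 := by
      ext a b
      exact hu a b
    have hcoeff : Matrix.of u * mat2 α * (Matrix.of u)ᵀ =
        Matrix.of fun a b => evalForm α ![u a, u b] := by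
      ext a b
      rw [Matrix.of_apply, evalForm_pair, Matrix.dotProduct_mulVec]
      rfl
    rw [mat2_eq_transpose_mul_mul hUU fun v hv => hU v fun a => by
      rw [dotProduct_comm]; exact congrFun hv a, hcoeff, Matrix.mul_apply]
    simp only [Matrix.mul_apply, Matrix.transpose_apply, Matrix.of_apply, Finset.sum_mul]
    rw [Finset.sum_comm]
    exact Finset.sum_congr rfl fun a _ => Finset.sum_congr rfl fun b _ => by ring
  ext s
  by_cases hs : s.card = 2
  · obtain ⟨i, j, hij, rfl⟩ : ∃ i j, i < j ∧ s = {i, j} := by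
      obtain ⟨i, j, hij, rfl⟩ := Finset.card_eq_two.mp hs
      rcases hij.lt_or_gt with h | h
      · exact ⟨i, j, h, rfl⟩
      · exact ⟨j, i, h, Finset.pair_comm i j⟩
    have hα' : α {i, j} = mat2 α i j := by simp [mat2, hij]
    have hskew : mat2 α j i = -mat2 α i j := congrFun₂ (transpose_mat2 α) i j
    have htwo : 2 * α {i, j} = mat2 α i j - mat2 α j i := by rw [hskew, hα']; ring
    simp only [Pi.smul_apply, smul_eq_mul, htwo, hmat, Finset.sum_apply,
      wedge_pair_of_isGrade_one (isGrade_flat _) _ hij, flat_singleton, mul_sub,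
      Finset.sum_sub_distrib]
  · simp only [Pi.smul_apply, smul_eq_mul, Finset.sum_apply, hα s hs,
      isGrade_wedge (isGrade_flat _) (isGrade_flat _) s hs, mul_zero, Finset.sum_const_zero]

theorem sum_psi7_mul (f : Finset (Fin 7) → 𝕜) :
    ∑ s, psi7 s * f s = f {3, 4, 5, 6} + f {1, 2, 5, 6} + f {1, 2, 3, 4} + f {0, 2, 4, 6}
      - f {0, 2, 3, 5} - f {0, 1, 4, 5} - f {0, 1, 3, 6} := by
  have h : (psi7 : Form 𝕜 7) = Pi.single {3, 4, 5, 6} 1 + Pi.single {1, 2, 5, 6} 1 +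
      Pi.single {1, 2, 3, 4} 1 + Pi.single {0, 2, 4, 6} 1 - Pi.single {0, 2, 3, 5} 1 -
      Pi.single {0, 1, 4, 5} 1 - Pi.single {0, 1, 3, 6} 1 := by
    funext s
    simp only [psi7, Pi.add_apply, Pi.sub_apply, Pi.single_apply]
    split_ifs <;> simp_all (decide := true)
  simp only [h, Pi.add_apply, Pi.sub_apply, add_mul, sub_mul, Finset.sum_add_distrib,
    Finset.sum_sub_distrib, Pi.single_apply, ite_mul, one_mul, zero_mul, Finset.sum_ite_eq',
    Finset.mem_univ, if_true]

theorem isGrade_psi7 : isGrade 4 (psi7 : Form 𝕜 7) := by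
  intro s hs
  simp only [psi7]
  split_ifs with h h h h h h h
  all_goals first | rfl | exact absurd (h ▸ rfl) hs

/-- The linear map `α ↦ (*₇(α ∧ *₇φ))♯`; on 2-forms it is the contraction with `φ`. -/
def phiContract : Form 𝕜 7 →ₗ[𝕜] Fin 7 → 𝕜 where
  toFun α := sharp1 (hstar (wedge α psi7))
  map_add' α β := by
    ext k
    simp [sharp1, hstar, wedge, mul_add, add_mul, Finset.sum_add_distrib]
  map_smul' c α := by
    ext k
    simp [sharp1, hstar, wedge, Finset.mul_sum, mul_left_comm, mul_assoc]

theorem phiContract_eq_zero_iff {α : Form 𝕜 7} (hα : isGrade 2 α) :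
    phiContract α = 0 ↔ wedge α psi7 = 0 :=
  sharp1_hstar_eq_zero_iff (isGrade_wedge hα isGrade_psi7)

theorem signMerge_eq_ite (s t : Finset (Fin n)) : (signMerge s t : 𝕜) =
    if Even ((s ×ˢ t).filter (fun p => p.2 < p.1)).card then 1 else -1 := by
  split_ifs with h
  · exact h.neg_one_pow
  · exact (Nat.not_even_iff_odd.mp h).neg_one_pow

theorem phiContract_apply (α : Form 𝕜 7) : phiContract α =
    ![α {1, 2} + α {3, 4} + α {5, 6}, -α {0, 2} + α {3, 5} - α {4, 6},
      α {0, 1} - α {3, 6} - α {4, 5}, -α {0, 4} - α {1, 5} + α {2, 6},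
      α {0, 3} + α {1, 6} + α {2, 5}, -α {0, 6} + α {1, 3} - α {2, 4},
      α {0, 5} - α {1, 4} - α {2, 3}] := by
  have hwedge : ∀ u, wedge α psi7 u =
      ∑ t, psi7 t * if t ⊆ u then signMerge (u \ t) t * α (u \ t) else 0 := by
    intro u
    rw [wedge_apply_eq_sum_right]
    simp only [mul_ite, mul_zero, ← Finset.sum_filter, Finset.filter_subset_univ, mul_comm]
  have hcompl : ({0}ᶜ : Finset (Fin 7)) = {1, 2, 3, 4, 5, 6} ∧
      ({1}ᶜ : Finset (Fin 7)) = {0, 2, 3, 4, 5, 6} ∧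
      ({2}ᶜ : Finset (Fin 7)) = {0, 1, 3, 4, 5, 6} ∧
      ({3}ᶜ : Finset (Fin 7)) = {0, 1, 2, 4, 5, 6} ∧
      ({4}ᶜ : Finset (Fin 7)) = {0, 1, 2, 3, 5, 6} ∧
      ({5}ᶜ : Finset (Fin 7)) = {0, 1, 2, 3, 4, 6} ∧
      ({6}ᶜ : Finset (Fin 7)) = {0, 1, 2, 3, 4, 5} := by
    decide
  have hmem : ∀ (i : Fin 7) (t : Finset (Fin 7)), i ∈ t → {i} \ t = ∅ := by simp
  ext k
  simp only [phiContract, LinearMap.coe_mk, AddHom.coe_mk, sharp1, hstar, hwedge, sum_psi7_mul]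
  fin_cases k <;>
    simp (decide := true) [signMerge_eq_ite, hcompl, Finset.insert_sdiff_of_mem,
      Finset.insert_sdiff_of_notMem, Finset.sdiff_eq_self_of_disjoint, hmem]
  all_goals ring

/-- The cross product of the `G₂`-structure, `⟨cross7 x y, z⟩ = φ(x, y, z)`. -/
def cross7 (x y : Fin 7 → 𝕜) : Fin 7 → 𝕜 :=
  phiContract (wedge (flat x) (flat y))

theorem cross7_apply (x y : Fin 7 → 𝕜) : cross7 x y =
    ![x 1 * y 2 - x 2 * y 1 + (x 3 * y 4 - x 4 * y 3) + (x 5 * y 6 - x 6 * y 5),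
      -(x 0 * y 2 - x 2 * y 0) + (x 3 * y 5 - x 5 * y 3) - (x 4 * y 6 - x 6 * y 4),
      x 0 * y 1 - x 1 * y 0 - (x 3 * y 6 - x 6 * y 3) - (x 4 * y 5 - x 5 * y 4),
      -(x 0 * y 4 - x 4 * y 0) - (x 1 * y 5 - x 5 * y 1) + (x 2 * y 6 - x 6 * y 2),
      x 0 * y 3 - x 3 * y 0 + (x 1 * y 6 - x 6 * y 1) + (x 2 * y 5 - x 5 * y 2),
      -(x 0 * y 6 - x 6 * y 0) + (x 1 * y 3 - x 3 * y 1) - (x 2 * y 4 - x 4 * y 2),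
      x 0 * y 5 - x 5 * y 0 - (x 1 * y 4 - x 4 * y 1) - (x 2 * y 3 - x 3 * y 2)] := by
  have hpair : ∀ i j, i < j → wedge (flat x) (flat y) {i, j} = x i * y j - x j * y i := by
    intro i j hij
    simp only [wedge_pair_of_isGrade_one (isGrade_flat x) _ hij, flat_singleton]
  simp [cross7, phiContract_apply, hpair]

theorem cross7_swap (x y : Fin 7 → 𝕜) : cross7 y x = -cross7 x y := by
  simp only [cross7_apply, Matrix.neg_cons, Matrix.neg_empty]
  ring_nf

theorem cross7_self (x : Fin 7 → 𝕜) : cross7 x x = 0 := by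
  simp [cross7_apply, mul_comm]

theorem evalForm_psi7 (v : Fin 4 → Fin 7 → 𝕜) : evalForm psi7 v =
    ((Matrix.of v).submatrix id ![3, 4, 5, 6]).det +
    ((Matrix.of v).submatrix id ![1, 2, 5, 6]).det +
    ((Matrix.of v).submatrix id ![1, 2, 3, 4]).det +
    ((Matrix.of v).submatrix id ![0, 2, 4, 6]).det -
    ((Matrix.of v).submatrix id ![0, 2, 3, 5]).det -
    ((Matrix.of v).submatrix id ![0, 1, 4, 5]).det -
    ((Matrix.of v).submatrix id ![0, 1, 3, 6]).det := by
  have hminor : ∀ (s : Finset (Fin 7)) (f : Fin 4 → Fin 7), StrictMono f → Finset.univ.image f = s →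
      (if h : s.card = 4 then
        (Matrix.of fun i j => v i (s.orderIsoOfFin h j)).det else 0) =
      ((Matrix.of v).submatrix id f).det := by
    rintro _ f hf rfl
    have hcard : (Finset.univ.image f).card = 4 := by
      simp [Finset.card_image_of_injective _ hf.injective]
    rw [dif_pos hcard, det_orderIsoOfFin_eq hcard hf (by simp)]
    rfl
  rw [evalForm, sum_psi7_mul, hminor _ ![3, 4, 5, 6] (by decide) (by decide),
    hminor _ ![1, 2, 5, 6] (by decide) (by decide), hminor _ ![1, 2, 3, 4] (by decide) (by decide),
    hminor _ ![0, 2, 4, 6] (by decide) (by decide), hminor _ ![0, 2, 3, 5] (by decide) (by decide),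
    hminor _ ![0, 1, 4, 5] (by decide) (by decide), hminor _ ![0, 1, 3, 6] (by decide) (by decide)]

theorem cross7_dotProduct_cross7 (v : Fin 4 → Fin 7 → 𝕜) :
    cross7 (v 0) (v 1) ⬝ᵥ cross7 (v 2) (v 3) =
      (v 0 ⬝ᵥ v 2) * (v 1 ⬝ᵥ v 3) - (v 0 ⬝ᵥ v 3) * (v 1 ⬝ᵥ v 2) + evalForm psi7 v := by
  simp [cross7_apply, evalForm_psi7, Matrix.det_succ_row_zero, Fin.sum_univ_succ, dotProduct,
    Fin.succAbove]
  ring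

theorem cross7_dotProduct_cross7_left (x y z : Fin 7 → 𝕜) :
    cross7 x y ⬝ᵥ cross7 x z = (x ⬝ᵥ x) * (y ⬝ᵥ z) - (x ⬝ᵥ z) * (y ⬝ᵥ x) := by
  have hψ : evalForm psi7 ![x, y, x, z] = 0 :=
    evalForm_eq_zero_of_eq psi7 (i := 0) (j := 2) rfl (by decide)
  simpa [hψ] using cross7_dotProduct_cross7 ![x, y, x, z]

theorem cross7_zero_succ_orthonormal {m : ℕ} {u : Fin (m + 1) → Fin 7 → 𝕜}
    (hu : ∀ i j, u i ⬝ᵥ u j = if i = j then 1 else 0) (i j : Fin m) :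
    cross7 (u 0) (u i.succ) ⬝ᵥ cross7 (u 0) (u j.succ) = if i = j then 1 else 0 := by
  simp [cross7_dotProduct_cross7_left, hu, (Fin.succ_ne_zero _).symm]

theorem sum_smul_eq_zero_iff_of_orthonormal {R ι κ : Type*} [Semiring R] [Fintype ι]
    [DecidableEq ι] [Fintype κ] {w : ι → κ → R}
    (hw : ∀ i j, w i ⬝ᵥ w j = if i = j then 1 else 0) (c : ι → R) :
    ∑ i, c i • w i = 0 ↔ ∀ i, c i = 0 := by
  refine ⟨fun h i => ?_, fun h => by simp [h]⟩
  have hi := congrArg (· ⬝ᵥ w i) h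
  simpa [sum_dotProduct, hw] using hi

theorem two_smul_phiContract_eq_sum_cross7 {ι : Type*} [Fintype ι] [DecidableEq ι]
    {α : Form 𝕜 7} (hα : isGrade 2 α) {u : ι → Fin 7 → 𝕜}
    (hu : ∀ a b, u a ⬝ᵥ u b = if a = b then 1 else 0)
    (hU : ∀ v, (∀ a, v ⬝ᵥ u a = 0) → iprod v α = 0) :
    (2 : 𝕜) • phiContract α = ∑ a, ∑ b, evalForm α ![u a, u b] • cross7 (u a) (u b) := by
  rw [← map_smul, two_smul_eq_sum_evalForm_smul_wedge hα hu hU]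
  simp only [map_sum, map_smul, cross7]

/-- Twice the coefficients of the self-dual part of the restriction of `α` to `span u` in the basis
`u₀♭ ∧ u₁♭ + u₂♭ ∧ u₃♭`, `u₀♭ ∧ u₂♭ + u₃♭ ∧ u₁♭`, `u₀♭ ∧ u₃♭ + u₁♭ ∧ u₂♭`, for orthonormal `u`. -/
def selfDualCoeff (u : Fin 4 → Fin n → 𝕜) (α : Form 𝕜 n) : Fin 3 → 𝕜 :=
  ![evalForm α ![u 0, u 1] + evalForm α ![u 2, u 3],
    evalForm α ![u 0, u 2] + evalForm α ![u 3, u 1],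
    evalForm α ![u 0, u 3] + evalForm α ![u 1, u 2]]

section Real

variable {u : Fin 4 → Fin 7 → ℝ}

theorem cross7_eq_cross7_of_coassociative
    (hu : ∀ i j, u i ⬝ᵥ u j = if i = j then 1 else 0) (hψ : evalForm psi7 u = 1) :
    cross7 (u 0) (u 1) = cross7 (u 2) (u 3) := by
  have hself : ∀ i j, i ≠ j → cross7 (u i) (u j) ⬝ᵥ cross7 (u i) (u j) = 1 := by
    intro i j hij
    simp [cross7_dotProduct_cross7_left, hu, hij]
  have hcross : cross7 (u 0) (u 1) ⬝ᵥ cross7 (u 2) (u 3) = 1 := by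
    simp [cross7_dotProduct_cross7 u, hu, hψ]
  rw [← sub_eq_zero, ← dotProduct_self_eq_zero, sub_dotProduct, dotProduct_sub, dotProduct_sub,
    hself 0 1 (by decide), hself 2 3 (by decide), dotProduct_comm (cross7 (u 2) (u 3)), hcross]
  norm_num

theorem phiContract_eq_sum_selfDualCoeff_smul_cross7
    (hu : ∀ i j, u i ⬝ᵥ u j = if i = j then 1 else 0) (hψ : evalForm psi7 u = 1)
    {α : Form ℝ 7} (hα : isGrade 2 α) (hU : ∀ v, (∀ i, v ⬝ᵥ u i = 0) → iprod v α = 0) :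
    phiContract α = ∑ i : Fin 3, selfDualCoeff u α i • cross7 (u 0) (u i.succ) := by
  have hcyc : ∀ σ : Equiv.Perm (Fin 4), Equiv.Perm.sign σ = 1 →
      cross7 (u (σ 0)) (u (σ 1)) = cross7 (u (σ 2)) (u (σ 3)) := by
    intro σ hσ
    refine cross7_eq_cross7_of_coassociative (u := u ∘ σ) (fun i j => ?_) ?_
    · simp [hu]
    · rw [evalForm_comp_perm, hσ, one_smul, hψ]
  have hcross23 : cross7 (u 2) (u 3) = cross7 (u 0) (u 1) :=
    (cross7_eq_cross7_of_coassociative hu hψ).symm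
  have hcross31 : cross7 (u 3) (u 1) = cross7 (u 0) (u 2) :=
    (hcyc c[1, 2, 3] (by decide)).symm
  have hcross12 : cross7 (u 1) (u 2) = cross7 (u 0) (u 3) :=
    (hcyc c[1, 3, 2] (by decide)).symm
  have hflip : ∀ i j, evalForm α ![u j, u i] • cross7 (u j) (u i) =
      evalForm α ![u i, u j] • cross7 (u i) (u j) := by
    intro i j
    rw [evalForm_pair_swap, cross7_swap, neg_smul_neg]
  refine smul_right_injective _ (two_ne_zero (α := ℝ)) ?_
  simp only [two_smul_phiContract_eq_sum_cross7 hα hu hU, Fin.sum_univ_four, Fin.sum_univ_three,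
    cross7_self, hflip 0 1, hflip 0 2, hflip 0 3, hflip 2 3, hflip 3 1, hflip 1 2, hcross23,
    hcross31, hcross12]
  simp only [selfDualCoeff, Matrix.cons_val, Fin.succ_zero_eq_one, Fin.succ_one_eq_two,
    Fin.reduceSucc]
  module

end Real

end Coassociative

/-- Lemma 6.3.  Let `U ⊂ ℝ⁷` be a coassociative subspace with positively
oriented orthonormal basis `(u₁,u₂,u₃,u₄)` (so `*₇φ(u₁,u₂,u₃,u₄) = 1`), and let
`α ∈ Λ²U* = {α : i(v)α = 0 for v ⊥ U}`.  Then `α` is anti-self-dual on `U` (with respect to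
the induced metric and this orientation) if and only if `α ∧ *₇φ = 0`. -/
theorem statement15 (u : Fin 4 → (Fin 7 → ℝ))
    (hu : ∀ i j, (∑ k, u i k * u j k) = if i = j then (1 : ℝ) else 0)
    (hCoasso : evalForm psi7 u = 1)
    (α : Form ℝ 7) (h2 : isGrade 2 α)
    (hU : ∀ v : Fin 7 → ℝ, (∀ i, ∑ k, v k * u i k = 0) → iprod v α = 0) :
    (evalForm α ![u 0, u 1] + evalForm α ![u 2, u 3] = 0 ∧
     evalForm α ![u 0, u 2] + evalForm α ![u 3, u 1] = 0 ∧
     evalForm α ![u 0, u 3] + evalForm α ![u 1, u 2] = 0) ↔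
    wedge α psi7 = 0 := by
  rw [← phiContract_eq_zero_iff h2, phiContract_eq_sum_selfDualCoeff_smul_cross7 hu hCoasso h2 hU,
    sum_smul_eq_zero_iff_of_orthonormal (cross7_zero_succ_orthonormal hu)]
  simp [selfDualCoeff, Fin.forall_fin_succ]

end FMpaper
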